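/- Let I ⊆ A = K[x_1,…,x_n] be a nonzero monomial ideal and m ≥ 1 an integer. The map F ↦ mF := {m·v : v ∈ F} is a bijection from the set of proper faces of conv(I) onto the set of proper faces of conv(I^m). -/

import Mathlib

open MvPolynomial Pointwise

attribute [local instance] Classical.propDecidable

noncomputable section

/-- The real exponent vector of a monomial exponent `a : Fin n →₀ ℕ`. -/
def expVec {n : ℕ} (a : Fin n →₀ ℕ) : Fin n → ℝ := fun i => (a i : ℝ)

/-- The standard inner product on `ℝ^n`. -/
def dotR {n : ℕ} (u v : Fin n → ℝ) : ℝ := ∑ i, u i * v i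

/-- A monomial ideal: an ideal generated by a set of monomials. -/
def IsMonomialIdeal {K : Type*} [Field K] {n : ℕ} (I : Ideal (MvPolynomial (Fin n) K)) : Prop :=
  ∃ S : Set (Fin n →₀ ℕ), I = Ideal.span ((fun a => (monomial a (1 : K))) '' S)

/-- The Newton polyhedron of an ideal: the convex hull of the exponent vectors of the
monomials belonging to the ideal. -/
def newtonPolyhedron {K : Type*} [Field K] {n : ℕ} (I : Ideal (MvPolynomial (Fin n) K)) :
    Set (Fin n → ℝ) :=
  convexHull ℝ {v | ∃ a : Fin n →₀ ℕ, monomial a (1 : K) ∈ I ∧ v = expVec a}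

/-- The hyperplane `{v : ⟨u,v⟩ = c}` is a supporting hyperplane of `C`:
`C ⊆ {v : ⟨u,v⟩ ≥ c}` and the hyperplane meets `C`. -/
def IsSupp {n : ℕ} (C : Set (Fin n → ℝ)) (u : Fin n → ℝ) (c : ℝ) : Prop :=
  (∀ v ∈ C, c ≤ dotR u v) ∧ ∃ v ∈ C, dotR u v = c

/-- `F` is a proper face of `C`: `F = S ∩ C` for some supporting hyperplane `S`, `F ≠ C`. -/
def IsProperFace {n : ℕ} (C F : Set (Fin n → ℝ)) : Prop :=
  ∃ u c, u ≠ 0 ∧ IsSupp C u c ∧ F = {v ∈ C | dotR u v = c} ∧ F ≠ C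

/-- A compact face is a proper face that is compact. -/
def IsCompactFace {n : ℕ} (C F : Set (Fin n → ℝ)) : Prop :=
  IsProperFace C F ∧ IsCompact F

/-- A maximal compact face: a compact face maximal under inclusion. -/
def IsMaxCompactFace {n : ℕ} (C F : Set (Fin n → ℝ)) : Prop :=
  IsCompactFace C F ∧ ∀ G, IsCompactFace C G → F ⊆ G → F = G

/-- The graded maximal ideal `(x_1, …, x_n)` of `K[x_1, …, x_n]`. -/
def maxIdeal (K : Type*) [Field K] (n : ℕ) : Ideal (MvPolynomial (Fin n) K) :=
  Ideal.span (Set.range fun i => (X i : MvPolynomial (Fin n) K))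

/-- `f` is a minimal generator of the monomial ideal `L` if `f ∈ L` and `f ∉ (x_1,…,x_n)·L`. -/
def IsMinGen {K : Type*} [Field K] {n : ℕ} (L : Ideal (MvPolynomial (Fin n) K))
    (f : MvPolynomial (Fin n) K) : Prop :=
  f ∈ L ∧ f ∉ maxIdeal K n * L

/-- `L` is a reduction ideal of `I`: `L ⊆ I` and `L·I^{m-1} = I^m` for some `m ≥ 1`. -/
def IsReduction {K : Type*} [Field K] {n : ℕ} (L I : Ideal (MvPolynomial (Fin n) K)) : Prop :=
  L ≤ I ∧ ∃ m : ℕ, 1 ≤ m ∧ L * I ^ (m - 1) = I ^ m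

/-!
For monomial ideals `Γ(IJ) = Γ(I) + Γ(J)`, since a monomial divisible by a product of generators
can put the excess into one factor. Convex hulls commute with Minkowski sums, and `pC + qC =
(p + q)C` for convex `C` and `p, q ≥ 0`, so `conv(I^m) = m conv(I)` for `m ≥ 1`. Dilation by a
positive scalar carries supporting hyperplanes, hence proper faces, to each other.
-/

section Faces

variable {n : ℕ} {C F : Set (Fin n → ℝ)} {u : Fin n → ℝ} {c r : ℝ}

lemma dotR_smul (u v : Fin n → ℝ) (r : ℝ) : dotR u (r • v) = r * dotR u v :=
  dotProduct_smul r u v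

lemma IsSupp.smul (hr : 0 ≤ r) (h : IsSupp C u c) : IsSupp (r • C) u (r * c) := by
  obtain ⟨hC, v, hv, hvc⟩ := h
  refine ⟨?_, r • v, Set.smul_mem_smul_set hv, by rw [dotR_smul, hvc]⟩
  rintro _ ⟨w, hw, rfl⟩
  simpa only [dotR_smul] using mul_le_mul_of_nonneg_left (hC w hw) hr

lemma smul_set_sep_dotR_eq (hr : r ≠ 0) (C : Set (Fin n → ℝ)) (u : Fin n → ℝ) (c : ℝ) :
    r • {v ∈ C | dotR u v = c} = {v ∈ r • C | dotR u v = r * c} := by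
  ext v
  simp only [Set.mem_smul_set_iff_inv_smul_mem₀ hr, Set.mem_ofPred_eq, dotR_smul,
    inv_mul_eq_iff_eq_mul₀ hr]

lemma IsProperFace.smul (hr : 0 < r) (h : IsProperFace C F) :
    IsProperFace (r • C) (r • F) := by
  obtain ⟨u, c, hu, hsupp, rfl, hne⟩ := h
  exact ⟨u, r * c, hu, hsupp.smul hr.le, smul_set_sep_dotR_eq hr.ne' C u c,
    (MulAction.injective₀ hr.ne').ne hne⟩

lemma bijOn_smul_isProperFace (hr : 0 < r) (C : Set (Fin n → ℝ)) :
    Set.BijOn (fun F => r • F) {F | IsProperFace C F} {F | IsProperFace (r • C) F} := by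
  refine Set.InvOn.bijOn (f' := fun F => r⁻¹ • F)
    ⟨fun F _ => inv_smul_smul₀ hr.ne' F, fun F _ => smul_inv_smul₀ hr.ne' F⟩
    (fun F hF => hF.smul hr) fun F hF => ?_
  simpa only [inv_smul_smul₀ hr.ne', Set.mem_ofPred_eq] using IsProperFace.smul (inv_pos.mpr hr) hF

end Faces

section ExponentSet

variable {σ R : Type*} [CommSemiring R]

/-- The set `Γ(I)` of exponents of the monomials lying in `I`; its convex hull is the Newton
polyhedron of `I`. -/
def exponentSet (I : Ideal (MvPolynomial σ R)) : Set (σ →₀ ℕ) :=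
  {a | monomial a (1 : R) ∈ I}

lemma image_monomial_add (S T : Set (σ →₀ ℕ)) :
    (fun a => monomial a (1 : R)) '' (S + T) =
      ((fun a => monomial a 1) '' S) * ((fun a => monomial a 1) '' T) :=
  Set.image_image2_distrib fun a b => by rw [monomial_mul, one_mul]

lemma span_monomial_mul_span_monomial (S T : Set (σ →₀ ℕ)) :
    Ideal.span ((fun a => monomial a (1 : R)) '' S) *
        Ideal.span ((fun a => monomial a (1 : R)) '' T) =
      Ideal.span ((fun a => monomial a (1 : R)) '' (S + T)) := by
  rw [Ideal.span_mul_span', image_monomial_add]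

lemma mem_exponentSet_span_monomial [Nontrivial R] {S : Set (σ →₀ ℕ)} {a : σ →₀ ℕ} :
    a ∈ exponentSet (Ideal.span ((fun s => monomial s (1 : R)) '' S)) ↔ ∃ s ∈ S, s ≤ a := by
  simp only [exponentSet, Set.mem_ofPred_eq, mem_ideal_span_monomial_image,
    support_monomial, one_ne_zero, if_false, Finset.mem_singleton, forall_eq]

lemma exponentSet_span_monomial_mul [Nontrivial R] (S T : Set (σ →₀ ℕ)) :
    exponentSet (Ideal.span ((fun a => monomial a (1 : R)) '' S) *
        Ideal.span ((fun a => monomial a (1 : R)) '' T)) =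
      exponentSet (Ideal.span ((fun a => monomial a (1 : R)) '' S)) +
        exponentSet (Ideal.span ((fun a => monomial a (1 : R)) '' T)) := by
  ext a
  simp only [span_monomial_mul_span_monomial, Set.mem_add, mem_exponentSet_span_monomial]
  constructor
  · rintro ⟨_, ⟨s, hs, t, ht, rfl⟩, hst⟩
    exact ⟨s, ⟨s, hs, le_rfl⟩, t + (a - (s + t)), ⟨t, ht, le_self_add⟩, by
      rw [← add_assoc, add_tsub_cancel_of_le hst]⟩
  · rintro ⟨b, ⟨s, hs, hsb⟩, c, ⟨t, ht, htc⟩, rfl⟩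
    exact ⟨s + t, ⟨s, hs, t, ht, rfl⟩, add_le_add hsb htc⟩

end ExponentSet

section NewtonPolyhedron

variable {K : Type*} [Field K] {n : ℕ} {I J : Ideal (MvPolynomial (Fin n) K)}

lemma IsMonomialIdeal.one : IsMonomialIdeal (1 : Ideal (MvPolynomial (Fin n) K)) :=
  ⟨{0}, by rw [Set.image_singleton, monomial_zero', C_1, Ideal.span_singleton_one,
    Ideal.one_eq_top]⟩

lemma IsMonomialIdeal.mul (hI : IsMonomialIdeal I) (hJ : IsMonomialIdeal J) :
    IsMonomialIdeal (I * J) := by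
  obtain ⟨S, rfl⟩ := hI
  obtain ⟨T, rfl⟩ := hJ
  exact ⟨S + T, span_monomial_mul_span_monomial S T⟩

lemma IsMonomialIdeal.pow (hI : IsMonomialIdeal I) (m : ℕ) : IsMonomialIdeal (I ^ m) := by
  induction m with
  | zero => rw [pow_zero]; exact .one
  | succ m ih => rw [pow_succ]; exact ih.mul hI

lemma IsMonomialIdeal.exponentSet_mul (hI : IsMonomialIdeal I) (hJ : IsMonomialIdeal J) :
    exponentSet (I * J) = exponentSet I + exponentSet J := by
  obtain ⟨S, rfl⟩ := hI
  obtain ⟨T, rfl⟩ := hJ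
  exact exponentSet_span_monomial_mul S T

lemma expVec_add (a b : Fin n →₀ ℕ) : expVec (a + b) = expVec a + expVec b :=
  funext fun i => Nat.cast_add (a i) (b i)

lemma newtonPolyhedron_eq_convexHull_image (I : Ideal (MvPolynomial (Fin n) K)) :
    newtonPolyhedron I = convexHull ℝ (expVec '' exponentSet I) := by
  simp only [newtonPolyhedron, exponentSet, Set.image, Set.mem_ofPred_eq, eq_comm]

lemma convex_newtonPolyhedron (I : Ideal (MvPolynomial (Fin n) K)) :
    Convex ℝ (newtonPolyhedron I) :=
  convex_convexHull ℝ _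

lemma newtonPolyhedron_mul (hI : IsMonomialIdeal I) (hJ : IsMonomialIdeal J) :
    newtonPolyhedron (I * J) = newtonPolyhedron I + newtonPolyhedron J := by
  have image_add : expVec '' (exponentSet I + exponentSet J) =
      expVec '' exponentSet I + expVec '' exponentSet J :=
    Set.image_image2_distrib expVec_add
  simp only [newtonPolyhedron_eq_convexHull_image, hI.exponentSet_mul hJ, image_add,
    convexHull_add]

lemma newtonPolyhedron_pow (hI : IsMonomialIdeal I) {m : ℕ} (hm : 1 ≤ m) :
    newtonPolyhedron (I ^ m) = (m : ℝ) • newtonPolyhedron I := by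
  induction m, hm using Nat.le_induction with
  | base => rw [pow_one, Nat.cast_one, one_smul]
  | succ m _ ih =>
    rw [pow_succ, newtonPolyhedron_mul (hI.pow m) hI, ih, Nat.cast_succ,
      (convex_newtonPolyhedron I).add_smul m.cast_nonneg zero_le_one, one_smul]

end NewtonPolyhedron

theorem stmt9 {K : Type*} [Field K] {n : ℕ} (I : Ideal (MvPolynomial (Fin n) K))
    (hI : IsMonomialIdeal I) (hne : I ≠ ⊥) (m : ℕ) (hm : 1 ≤ m) :
    Set.BijOn (fun F => (fun v => (m : ℝ) • v) '' F)
      {F | IsProperFace (newtonPolyhedron I) F}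
      {F | IsProperFace (newtonPolyhedron (I ^ m)) F} := by
  rw [newtonPolyhedron_pow hI hm]
  exact bijOn_smul_isProperFace (Nat.cast_pos.mpr hm) (newtonPolyhedron I)
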